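/- Let N ≥ 2, s ∈ (0,1), let B ⊂ ℝ^N be an open ball centered at the origin, and let u be a continuous first nontrivial eigenfunction on B such that u is not antisymmetric with respect to any hyperplane through the origin, i.e. for every e ∈ 𝕊^{N−1} one has u∘σ_e ≢ −u. Let p ∈ 𝕊^{N−1} be such that u is foliated Schwarz symmetric with respect to p. Then u + u∘σ_p is a first nontrivial eigenfunction on B which is radially symmetric. -/

import Mathlib

open MeasureTheory Filter Topology Bornology Set
open scoped ENNReal NNReal

noncomputable section

namespace FracNeumann

abbrev Euc (N : ℕ) : Type := EuclideanSpace ℝ (Fin N)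

/-- The kernel weight `|x - y| ^ (N + 2s)`. -/
def kern (N : ℕ) (s : ℝ) (x y : Euc N) : ℝ := ‖x - y‖ ^ ((N : ℝ) + 2 * s)

/-- The region `ℝ^{2N} \ (Ω^c × Ω^c)`, where `Ω^c := ℝ^N \ closure Ω`. -/
def reg (N : ℕ) (Ω : Set (Euc N)) : Set (Euc N × Euc N) :=
  {q | q.1 ∈ closure Ω ∨ q.2 ∈ closure Ω}

/-- The squared seminorm `[u]_{H^s_{Ω,0}}²`, as an extended real number. -/
def semiSq (N : ℕ) (s : ℝ) (Ω : Set (Euc N)) (u : Euc N → ℝ) : ℝ≥0∞ :=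
  ∫⁻ q in reg N Ω, ENNReal.ofReal ((u q.1 - u q.2) ^ 2 / kern N s q.1 q.2)

/-- `∫_Ω u²`, as an extended real number. -/
def l2sq (N : ℕ) (Ω : Set (Euc N)) (u : Euc N → ℝ) : ℝ≥0∞ :=
  ∫⁻ x in Ω, ENNReal.ofReal ((u x) ^ 2)

/-- Membership in `H^s_{Ω,0}`. -/
def memHs (N : ℕ) (s : ℝ) (Ω : Set (Euc N)) (u : Euc N → ℝ) : Prop :=
  Measurable u ∧ l2sq N Ω u < ⊤ ∧ semiSq N s Ω u < ⊤

/-- The squared Gagliardo seminorm `[u]_{H^s(Ω)}²`. -/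
def semiSqOn (N : ℕ) (s : ℝ) (Ω : Set (Euc N)) (u : Euc N → ℝ) : ℝ≥0∞ :=
  ∫⁻ q in Ω ×ˢ Ω, ENNReal.ofReal ((u q.1 - u q.2) ^ 2 / kern N s q.1 q.2)

/-- Membership in `H^s(Ω)` (for functions defined on all of `ℝ^N`). -/
def memHsOn (N : ℕ) (s : ℝ) (Ω : Set (Euc N)) (u : Euc N → ℝ) : Prop :=
  Measurable u ∧ l2sq N Ω u < ⊤ ∧ semiSqOn N s Ω u < ⊤

/-- The normalizing constant `c_{N,s}` of the fractional Laplacian. -/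
def cNs (N : ℕ) (s : ℝ) : ℝ :=
  (4 : ℝ) ^ s * s * Real.Gamma ((N : ℝ) / 2 + s) /
    (Real.pi ^ ((N : ℝ) / 2) * Real.Gamma (1 - s))

/-- The nonlocal Neumann derivative `𝒩_s u`. -/
def Nneu (N : ℕ) (s : ℝ) (Ω : Set (Euc N)) (u : Euc N → ℝ) (x : Euc N) : ℝ :=
  cNs N s * ∫ y in Ω, (u x - u y) / kern N s x y

/-- Membership in `H̃^s_{Ω,0}`: members of `H^s_{Ω,0}` with `𝒩_s u = 0` a.e. in `Ω^c`. -/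
def memHsTilde (N : ℕ) (s : ℝ) (Ω : Set (Euc N)) (u : Euc N → ℝ) : Prop :=
  memHs N s Ω u ∧ ∀ᵐ x ∂(volume.restrict (closure Ω)ᶜ), Nneu N s Ω u x = 0

/-- The first nontrivial Neumann eigenvalue `μ₁^{(s)}(Ω)`. -/
def mu1 (N : ℕ) (s : ℝ) (Ω : Set (Euc N)) : ℝ :=
  sInf {t : ℝ | ∃ u : Euc N → ℝ, memHs N s Ω u ∧ (∫ x in Ω, (u x) ^ 2) = 1 ∧
    (∫ x in Ω, u x) = 0 ∧ t = cNs N s / 2 * (semiSq N s Ω u).toReal}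

/-- The bilinear form (without the constant). -/
def bform (N : ℕ) (s : ℝ) (Ω : Set (Euc N)) (u v : Euc N → ℝ) : ℝ :=
  ∫ q in reg N Ω, (u q.1 - u q.2) * (v q.1 - v q.2) / kern N s q.1 q.2

/-- First nontrivial eigenfunction: weak solution associated to `μ₁^{(s)}(Ω)`. -/
def IsFirstEigen (N : ℕ) (s : ℝ) (Ω : Set (Euc N)) (u : Euc N → ℝ) : Prop :=
  memHs N s Ω u ∧ ¬ (u =ᵐ[volume.restrict Ω] 0) ∧ (∫ x in Ω, u x) = 0 ∧
    ∀ v : Euc N → ℝ, memHs N s Ω v →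
      cNs N s / 2 * bform N s Ω u v = mu1 N s Ω * ∫ x in Ω, u x * v x

/-- Reflection `σ_e(x) = x - 2(x·e)e` across the hyperplane `{x·e = 0}`. -/
def reflect (N : ℕ) (e x : Euc N) : Euc N := x - (2 * (inner ℝ x e : ℝ)) • e

/-- The polarization `P_e u` with respect to the hyperplane `{x·e = 0}`. -/
def polarize (N : ℕ) (e : Euc N) (u : Euc N → ℝ) (x : Euc N) : ℝ :=
  if 0 ≤ (inner ℝ x e : ℝ) then min (u x) (u (reflect N e x))
  else max (u x) (u (reflect N e x))

/-- Foliated Schwarz symmetry with respect to `p`. -/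
def FoliatedSchwarz (N : ℕ) (p : Euc N) (u : Euc N → ℝ) : Prop :=
  ∃ uh : ℝ → ℝ → ℝ, (∀ r : ℝ, AntitoneOn (uh r) (Icc 0 Real.pi)) ∧
    ∀ x : Euc N, x ≠ 0 → u x = uh ‖x‖ (Real.arccos ((inner ℝ x p : ℝ) / ‖x‖))

/-- Radial symmetry (pointwise). -/
def Radial (N : ℕ) (u : Euc N → ℝ) : Prop := ∃ f : ℝ → ℝ, ∀ x, u x = f ‖x‖

/-- Radial symmetry (a.e.). -/
def RadialAE (N : ℕ) (u : Euc N → ℝ) : Prop :=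
  ∃ f : ℝ → ℝ, ∀ᵐ x : Euc N ∂volume, u x = f ‖x‖

/-- The set `{x ∈ Ω : u x ≠ 0}` has exactly two connected components. -/
def TwoNodal (N : ℕ) (Ω : Set (Euc N)) (u : Euc N → ℝ) : Prop :=
  Nat.card (ConnectedComponents {x : Euc N // x ∈ Ω ∧ u x ≠ 0}) = 2

/-- Bounded Lipschitz domain: open, bounded, connected, and near every boundary point the set
is the region above the graph of a Lipschitz function in some direction `e`. -/
def IsLipschitzDomain (N : ℕ) (Ω : Set (Euc N)) : Prop :=
  IsOpen Ω ∧ IsBounded Ω ∧ IsConnected Ω ∧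
    ∀ x ∈ frontier Ω, ∃ e : Euc N, ‖e‖ = 1 ∧ ∃ r : ℝ, 0 < r ∧
      ∃ (L : NNReal) (f : Euc N → ℝ), LipschitzWith L f ∧
        ∀ y ∈ Metric.ball x r,
          (y ∈ Ω ↔ f (y - ((inner ℝ y e : ℝ)) • e) < (inner ℝ y e : ℝ))

/-- `g` is a weak gradient of `u` in `Ω`, square-integrable on `Ω`. -/
def IsWeakGradient (N : ℕ) (Ω : Set (Euc N)) (u : Euc N → ℝ) (g : Euc N → Euc N) : Prop :=
  Measurable g ∧ (∫⁻ x in Ω, ENNReal.ofReal (‖g x‖ ^ 2)) < ⊤ ∧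
    ∀ φ : Euc N → ℝ, ContDiff ℝ (⊤ : ℕ∞) φ → HasCompactSupport φ → tsupport φ ⊆ Ω →
      ∀ i : Fin N, (∫ x in Ω, u x * fderiv ℝ φ x (EuclideanSpace.single i 1)) =
        - ∫ x in Ω, g x i * φ x

/-- Membership in `H¹(Ω)`. -/
def memH1 (N : ℕ) (Ω : Set (Euc N)) (u : Euc N → ℝ) : Prop :=
  Measurable u ∧ l2sq N Ω u < ⊤ ∧ ∃ g, IsWeakGradient N Ω u g

/-- `∫_Ω |∇u|²`, as an extended real number. -/
def gradSq (N : ℕ) (Ω : Set (Euc N)) (u : Euc N → ℝ) : ℝ≥0∞ :=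
  ⨅ (g : Euc N → Euc N) (_ : IsWeakGradient N Ω u g), ∫⁻ x in Ω, ENNReal.ofReal (‖g x‖ ^ 2)

/-- Rayleigh quotient for the fractional Neumann problem. -/
def rayleighS (N : ℕ) (s : ℝ) (Ω : Set (Euc N)) (u : Euc N → ℝ) : ℝ≥0∞ :=
  ENNReal.ofReal (cNs N s / 2) * semiSq N s Ω u / l2sq N Ω u

/-- Rayleigh quotient for the local Neumann problem. -/
def rayleigh1 (N : ℕ) (Ω : Set (Euc N)) (u : Euc N → ℝ) : ℝ≥0∞ :=
  gradSq N Ω u / l2sq N Ω u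

/-- The min-max value `μ_n^{(s)}(Ω)` over `n`-dimensional subspaces of `H^s_{Ω,0} ∩ L²₀(Ω)`. -/
def muNs (N : ℕ) (s : ℝ) (Ω : Set (Euc N)) (n : ℕ) : ℝ≥0∞ :=
  ⨅ (A : Submodule ℝ (Euc N → ℝ)) (_ : Module.finrank ℝ A = n ∧
      (∀ u ∈ A, memHs N s Ω u ∧ (∫ x in Ω, u x) = 0) ∧
      (∀ u ∈ A, u =ᵐ[(volume : Measure (Euc N))] 0 → u = 0)),
    ⨆ (u : Euc N → ℝ) (_ : u ∈ A ∧ u ≠ 0), rayleighS N s Ω u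

/-- The min-max value over `n`-dimensional subspaces of `H̃^s_{Ω,0} ∩ L²₀(Ω)`. -/
def muNsTilde (N : ℕ) (s : ℝ) (Ω : Set (Euc N)) (n : ℕ) : ℝ≥0∞ :=
  ⨅ (A : Submodule ℝ (Euc N → ℝ)) (_ : Module.finrank ℝ A = n ∧
      (∀ u ∈ A, memHsTilde N s Ω u ∧ (∫ x in Ω, u x) = 0) ∧
      (∀ u ∈ A, u =ᵐ[(volume : Measure (Euc N))] 0 → u = 0)),
    ⨆ (u : Euc N → ℝ) (_ : u ∈ A ∧ u ≠ 0), rayleighS N s Ω u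

/-- The min-max value `μ_n^{(1)}(Ω)` over `n`-dimensional subspaces of `H¹(Ω) ∩ L²₀(Ω)`. -/
def muN1 (N : ℕ) (Ω : Set (Euc N)) (n : ℕ) : ℝ≥0∞ :=
  ⨅ (A : Submodule ℝ (Euc N → ℝ)) (_ : Module.finrank ℝ A = n ∧
      (∀ u ∈ A, memH1 N Ω u ∧ (∫ x in Ω, u x) = 0) ∧
      (∀ u ∈ A, u =ᵐ[volume.restrict Ω] 0 → u = 0)),
    ⨆ (u : Euc N → ℝ) (_ : u ∈ A ∧ u ≠ 0), rayleigh1 N Ω u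

/-- `μ_n^{(s)}(Ω)` including `μ₀^{(s)}(Ω) := 0`. -/
def muNsFull (N : ℕ) (s : ℝ) (Ω : Set (Euc N)) (n : ℕ) : ℝ≥0∞ :=
  if n = 0 then 0 else muNs N s Ω n

/-- `μ_n^{(1)}(Ω)` including `μ₀^{(1)}(Ω) := 0`. -/
def muN1Full (N : ℕ) (Ω : Set (Euc N)) (n : ℕ) : ℝ≥0∞ :=
  if n = 0 then 0 else muN1 N Ω n

/-- The squared `H^s_{Ω,0}`-seminorm of the `s`-minimal extension of `u`:
the minimal value of `[v]²` over `v ∈ H^s_{Ω,0}` with `v = u` a.e. in `Ω`. -/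
def minExtSemiSq (N : ℕ) (s : ℝ) (Ω : Set (Euc N)) (u : Euc N → ℝ) : ℝ≥0∞ :=
  ⨅ (v : Euc N → ℝ) (_ : memHs N s Ω v ∧ v =ᵐ[volume.restrict Ω] u), semiSq N s Ω v

/-- `ω_{N-1}`: volume of the unit ball of `ℝ^{N-1}`. -/
def omegaPrev (N : ℕ) : ℝ := (volume (Metric.ball (0 : Euc (N - 1)) 1)).toReal

/-- Membership in `L²₀(Ω)`. -/
def memL20 (N : ℕ) (Ω : Set (Euc N)) (u : Euc N → ℝ) : Prop :=
  Measurable u ∧ l2sq N Ω u < ⊤ ∧ (∫ x in Ω, u x) = 0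

/-- The functional `F_s` (value `+∞` outside `H^s(Ω)`). -/
def Fs (N : ℕ) (s : ℝ) (Ω : Set (Euc N)) (u : Euc N → ℝ) : ℝ≥0∞ :=
  ENNReal.ofReal (1 - s) * minExtSemiSq N s Ω u

/-- The functional `F₁` (value `+∞` outside `H¹(Ω)`). -/
def F1 (N : ℕ) (Ω : Set (Euc N)) (u : Euc N → ℝ) : ℝ≥0∞ :=
  ENNReal.ofReal (omegaPrev N / (2 * N)) * gradSq N Ω u

end FracNeumann
namespace FracNeumann

/-- The integrand of the bilinear form. -/
def qf (N : ℕ) (s : ℝ) (u v : Euc N → ℝ) (q : Euc N × Euc N) : ℝ :=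
  (u q.1 - u q.2) * (v q.1 - v q.2) / kern N s q.1 q.2

lemma kern_nonneg (N : ℕ) (s : ℝ) (x y : Euc N) : 0 ≤ kern N s x y :=
  Real.rpow_nonneg (norm_nonneg _) _

lemma measurable_kern (N : ℕ) (s : ℝ) :
    Measurable (fun q : Euc N × Euc N => kern N s q.1 q.2) := by
  unfold kern
  exact (measurable_fst.sub measurable_snd).norm.pow_const _

lemma measurable_qf {N : ℕ} {s : ℝ} {u v : Euc N → ℝ} (hu : Measurable u) (hv : Measurable v) :
    Measurable (qf N s u v) := by
  unfold qf
  exact (((hu.comp measurable_fst).sub (hu.comp measurable_snd)).mul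
    ((hv.comp measurable_fst).sub (hv.comp measurable_snd))).div (measurable_kern N s)

lemma qf_self_nonneg (N : ℕ) (s : ℝ) (u : Euc N → ℝ) (q : Euc N × Euc N) :
    0 ≤ qf N s u u q :=
  div_nonneg (mul_self_nonneg _) (kern_nonneg _ _ _ _)

lemma semiSq_eq (N : ℕ) (s : ℝ) (B : Set (Euc N)) (u : Euc N → ℝ) :
    semiSq N s B u = ∫⁻ q in reg N B, ENNReal.ofReal (qf N s u u q) := by
  unfold semiSq qf
  simp only [pow_two]

lemma memHs_iff {N : ℕ} {s : ℝ} {B : Set (Euc N)} {u : Euc N → ℝ} :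
    memHs N s B u ↔ Measurable u ∧ IntegrableOn (fun x => u x ^ 2) B ∧
      IntegrableOn (qf N s u u) (reg N B) := by
  unfold memHs
  refine and_congr_right fun hu => and_congr ?_ ?_
  · rw [l2sq, lt_top_iff_ne_top, lintegral_ofReal_ne_top_iff_integrable
      (hu.pow_const 2).aestronglyMeasurable (Eventually.of_forall fun x => sq_nonneg _)]
    rfl
  · rw [semiSq_eq, lt_top_iff_ne_top, lintegral_ofReal_ne_top_iff_integrable
      (measurable_qf hu hu).aestronglyMeasurable (Eventually.of_forall (qf_self_nonneg N s u))]
    rfl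

lemma bform_self {N : ℕ} {s : ℝ} {B : Set (Euc N)} {u : Euc N → ℝ} (hu : Measurable u) :
    bform N s B u u = (semiSq N s B u).toReal := by
  rw [semiSq_eq]
  exact integral_eq_lintegral_of_nonneg_ae (Eventually.of_forall (qf_self_nonneg N s u))
    (measurable_qf hu hu).aestronglyMeasurable

lemma integrable_qf {N : ℕ} {s : ℝ} {B : Set (Euc N)} {u v : Euc N → ℝ}
    (hu : memHs N s B u) (hv : memHs N s B v) : IntegrableOn (qf N s u v) (reg N B) := by
  rw [memHs_iff] at hu hv
  refine (hu.2.2.add hv.2.2).mono' (measurable_qf hu.1 hv.1).aestronglyMeasurable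
    (Eventually.of_forall fun q => ?_)
  simp only [qf, Pi.add_apply, Real.norm_eq_abs]
  rw [abs_div, abs_of_nonneg (kern_nonneg _ _ _ _), ← add_div]
  refine div_le_div_of_nonneg_right ?_ (kern_nonneg _ _ _ _)
  rw [abs_le]
  constructor <;>
  nlinarith [sq_nonneg (u q.1 - u q.2 - (v q.1 - v q.2)), sq_nonneg (u q.1 - u q.2 + (v q.1 - v q.2)),
    sq_nonneg (u q.1 - u q.2), sq_nonneg (v q.1 - v q.2)]

lemma integrable_mul {N : ℕ} {s : ℝ} {B : Set (Euc N)} {u v : Euc N → ℝ}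
    (hu : memHs N s B u) (hv : memHs N s B v) : IntegrableOn (fun x => u x * v x) B := by
  rw [memHs_iff] at hu hv
  refine (hu.2.1.add hv.2.1).mono' (hu.1.mul hv.1).aestronglyMeasurable
    (Eventually.of_forall fun x => ?_)
  simp only [Pi.add_apply, Real.norm_eq_abs]
  rw [abs_le]
  constructor <;> nlinarith [sq_nonneg (u x - v x), sq_nonneg (u x + v x), sq_nonneg (u x),
    sq_nonneg (v x)]

lemma integrable_self {N : ℕ} {s : ℝ} {B : Set (Euc N)} {u : Euc N → ℝ}
    (hB : volume B ≠ ⊤) (hu : memHs N s B u) : IntegrableOn u B := by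
  rw [memHs_iff] at hu
  have h1 : IntegrableOn (fun _ : Euc N => (1 : ℝ)) B := integrableOn_const hB
  refine (hu.2.1.add h1).mono' hu.1.aestronglyMeasurable
    (Eventually.of_forall fun x => ?_)
  simp only [Pi.add_apply, Real.norm_eq_abs]
  rw [abs_le]
  constructor <;> nlinarith [sq_nonneg (u x - 1), sq_nonneg (u x + 1), sq_nonneg (u x)]

lemma memHs_add {N : ℕ} {s : ℝ} {B : Set (Euc N)} {u v : Euc N → ℝ}
    (hu : memHs N s B u) (hv : memHs N s B v) : memHs N s B (fun x => u x + v x) := by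
  have h1 := integrable_qf hu hv
  have h2 := integrable_mul hu hv
  rw [memHs_iff] at hu hv ⊢
  refine ⟨hu.1.add hv.1, ?_, ?_⟩
  · refine ((hu.2.1.add hv.2.1).add (h2.const_mul 2)).congr (Eventually.of_forall fun x => ?_)
    simp only [Pi.add_apply]; ring
  · refine ((hu.2.2.add hv.2.2).add (h1.const_mul 2)).congr (Eventually.of_forall fun x => ?_)
    simp only [Pi.add_apply, qf]; ring

lemma memHs_smul {N : ℕ} {s : ℝ} {B : Set (Euc N)} {u : Euc N → ℝ} (c : ℝ)
    (hu : memHs N s B u) : memHs N s B (fun x => c * u x) := by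
  rw [memHs_iff] at hu ⊢
  refine ⟨hu.1.const_mul c, ?_, ?_⟩
  · refine (hu.2.1.const_mul (c ^ 2)).congr (Eventually.of_forall fun x => ?_)
    simp only; ring
  · refine (hu.2.2.const_mul (c ^ 2)).congr (Eventually.of_forall fun x => ?_)
    simp only [qf]; ring

lemma bform_smul_self {N : ℕ} {s : ℝ} {B : Set (Euc N)} {u : Euc N → ℝ} (c : ℝ) :
    bform N s B (fun x => c * u x) (fun x => c * u x) = c ^ 2 * bform N s B u u := by
  unfold bform
  rw [← integral_const_mul]
  congr 1; ext q; ring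

/-- Weak solutions (possibly trivial) for the eigenvalue `mu1`. -/
structure WSol (N : ℕ) (s : ℝ) (B : Set (Euc N)) (u : Euc N → ℝ) : Prop where
  mem : memHs N s B u
  mean : (∫ x in B, u x) = 0
  eqn : ∀ v : Euc N → ℝ, memHs N s B v →
      cNs N s / 2 * bform N s B u v = mu1 N s B * ∫ x in B, u x * v x

lemma WSol.add {N : ℕ} {s : ℝ} {B : Set (Euc N)} {u v : Euc N → ℝ} (hB : volume B ≠ ⊤)
    (hu : WSol N s B u) (hv : WSol N s B v) : WSol N s B (fun x => u x + v x) where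
  mem := memHs_add hu.mem hv.mem
  mean := by
    rw [integral_add (integrable_self hB hu.mem) (integrable_self hB hv.mem), hu.mean, hv.mean,
      add_zero]
  eqn z hz := by
    have h1 : bform N s B (fun x => u x + v x) z = bform N s B u z + bform N s B v z := by
      unfold bform
      refine Eq.trans ?_ (integral_add (integrable_qf hu.mem hz) (integrable_qf hv.mem hz))
      congr 1; ext q; simp only; ring
    have h2 : (∫ x in B, (u x + v x) * z x) = (∫ x in B, u x * z x) + ∫ x in B, v x * z x := by
      rw [← integral_add (integrable_mul hu.mem hz) (integrable_mul hv.mem hz)]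
      congr 1; ext q; ring
    rw [h1, h2, mul_add, mul_add, hu.eqn z hz, hv.eqn z hz]

lemma WSol.smul {N : ℕ} {s : ℝ} {B : Set (Euc N)} {u : Euc N → ℝ} (c : ℝ)
    (hu : WSol N s B u) : WSol N s B (fun x => c * u x) where
  mem := memHs_smul c hu.mem
  mean := by
    rw [integral_const_mul, hu.mean, mul_zero]
  eqn z hz := by
    have h1 : bform N s B (fun x => c * u x) z = c * bform N s B u z := by
      unfold bform
      rw [← integral_const_mul]
      congr 1; ext q; ring
    have h2 : (∫ x in B, c * u x * z x) = c * (∫ x in B, u x * z x) := by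
      rw [← integral_const_mul]
      congr 1; ext q; ring
    rw [h1, h2, mul_left_comm, hu.eqn z hz, mul_left_comm]

/-! Invariance under linear isometries. -/

lemma ball_preimage {N : ℕ} (R : ℝ) (ρ : Euc N ≃ₗᵢ[ℝ] Euc N) :
    ρ ⁻¹' Metric.ball (0 : Euc N) R = Metric.ball (0 : Euc N) R := by
  ext x; simp

lemma mem_closure_ball {N : ℕ} {R : ℝ} (hR : 0 < R) (ρ : Euc N ≃ₗᵢ[ℝ] Euc N) (x : Euc N) :
    ρ x ∈ closure (Metric.ball (0 : Euc N) R) ↔ x ∈ closure (Metric.ball (0 : Euc N) R) := by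
  rw [closure_ball _ hR.ne']; simp

lemma emb_iso {N : ℕ} (ρ : Euc N ≃ₗᵢ[ℝ] Euc N) : MeasurableEmbedding ρ :=
  ρ.toHomeomorph.measurableEmbedding

lemma emb_prod {N : ℕ} (ρ τ : Euc N ≃ₗᵢ[ℝ] Euc N) : MeasurableEmbedding (Prod.map ρ τ) :=
  (emb_iso ρ).prodMap (emb_iso τ)

lemma mp_prod {N : ℕ} (ρ τ : Euc N ≃ₗᵢ[ℝ] Euc N) :
    MeasurePreserving (Prod.map ρ τ) (volume : Measure (Euc N × Euc N)) volume :=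
  ρ.measurePreserving.prod τ.measurePreserving

lemma reg_preimage {N : ℕ} {R : ℝ} (hR : 0 < R) (ρ τ : Euc N ≃ₗᵢ[ℝ] Euc N) :
    Prod.map ρ τ ⁻¹' reg N (Metric.ball (0 : Euc N) R) = reg N (Metric.ball (0 : Euc N) R) := by
  ext q
  simp only [reg, mem_preimage, mem_ofPred_eq, Prod.map_fst, Prod.map_snd, mem_closure_ball hR]

lemma kern_iso {N : ℕ} (s : ℝ) (ρ : Euc N ≃ₗᵢ[ℝ] Euc N) (x y : Euc N) :
    kern N s (ρ x) (ρ y) = kern N s x y := by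
  unfold kern
  rw [← map_sub, ρ.norm_map]

lemma setIntegral_reg {N : ℕ} {R : ℝ} (hR : 0 < R) (ρ τ : Euc N ≃ₗᵢ[ℝ] Euc N)
    (F : Euc N × Euc N → ℝ) :
    (∫ q in reg N (Metric.ball (0 : Euc N) R), F (ρ q.1, τ q.2)) =
      ∫ q in reg N (Metric.ball (0 : Euc N) R), F q := by
  have := (mp_prod ρ τ).setIntegral_preimage_emb (emb_prod ρ τ) F
    (reg N (Metric.ball (0 : Euc N) R))
  rw [reg_preimage hR] at this
  exact this

lemma setLIntegral_reg {N : ℕ} {R : ℝ} (hR : 0 < R) (ρ τ : Euc N ≃ₗᵢ[ℝ] Euc N)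
    (F : Euc N × Euc N → ℝ≥0∞) :
    (∫⁻ q in reg N (Metric.ball (0 : Euc N) R), F (ρ q.1, τ q.2)) =
      ∫⁻ q in reg N (Metric.ball (0 : Euc N) R), F q := by
  have := (mp_prod ρ τ).setLIntegral_comp_preimage_emb (emb_prod ρ τ) F
    (reg N (Metric.ball (0 : Euc N) R))
  rw [reg_preimage hR] at this
  exact this

lemma setIntegral_ball {N : ℕ} {R : ℝ} (ρ : Euc N ≃ₗᵢ[ℝ] Euc N) (F : Euc N → ℝ) :
    (∫ x in Metric.ball (0 : Euc N) R, F (ρ x)) = ∫ x in Metric.ball (0 : Euc N) R, F x := by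
  have := ρ.measurePreserving.setIntegral_preimage_emb (emb_iso ρ) F (Metric.ball (0 : Euc N) R)
  rw [ball_preimage] at this
  exact this

lemma setLIntegral_ball {N : ℕ} {R : ℝ} (ρ : Euc N ≃ₗᵢ[ℝ] Euc N) (F : Euc N → ℝ≥0∞) :
    (∫⁻ x in Metric.ball (0 : Euc N) R, F (ρ x)) = ∫⁻ x in Metric.ball (0 : Euc N) R, F x := by
  have := ρ.measurePreserving.setLIntegral_comp_preimage_emb (emb_iso ρ) F
    (Metric.ball (0 : Euc N) R)
  rw [ball_preimage] at this
  exact this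

lemma memHs_iso {N : ℕ} {s R : ℝ} (hR : 0 < R) {u : Euc N → ℝ} (ρ : Euc N ≃ₗᵢ[ℝ] Euc N)
    (hu : memHs N s (Metric.ball 0 R) u) : memHs N s (Metric.ball 0 R) (fun x => u (ρ x)) := by
  refine ⟨hu.1.comp (emb_iso ρ).measurable, ?_, ?_⟩
  · have h := setLIntegral_ball (R := R) ρ (fun x => ENNReal.ofReal (u x ^ 2))
    have h2 := hu.2.1
    unfold l2sq at h2 ⊢
    rwa [h]
  · have h := setLIntegral_reg hR ρ ρ
      (fun q => ENNReal.ofReal ((u q.1 - u q.2) ^ 2 / kern N s q.1 q.2))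
    have h2 := hu.2.2
    unfold semiSq at h2 ⊢
    simp only [kern_iso] at h
    rwa [h]

lemma WSol.iso {N : ℕ} {s R : ℝ} (hR : 0 < R) {u : Euc N → ℝ} (ρ : Euc N ≃ₗᵢ[ℝ] Euc N)
    (hu : WSol N s (Metric.ball 0 R) u) : WSol N s (Metric.ball 0 R) (fun x => u (ρ x)) where
  mem := memHs_iso hR ρ hu.mem
  mean := by rw [setIntegral_ball ρ u, hu.mean]
  eqn z hz := by
    have h := hu.eqn _ (memHs_iso hR ρ.symm hz)
    have h1 : bform N s (Metric.ball 0 R) (fun x => u (ρ x)) z =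
        bform N s (Metric.ball 0 R) u (fun x => z (ρ.symm x)) := by
      have := setIntegral_reg hR ρ ρ (fun q => (u q.1 - u q.2) *
        (z (ρ.symm q.1) - z (ρ.symm q.2)) / kern N s q.1 q.2)
      simp only [kern_iso, LinearIsometryEquiv.symm_apply_apply] at this
      exact this
    have h2 := setIntegral_ball (R := R) ρ (fun x => u x * z (ρ.symm x))
    simp only [LinearIsometryEquiv.symm_apply_apply] at h2
    rw [h1, h2, h]

/-! Reflections. -/

lemma inner_self_one {N : ℕ} {e : Euc N} (he : ‖e‖ = 1) : inner ℝ e e = (1 : ℝ) := by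
  rw [real_inner_self_eq_norm_sq, he]; norm_num

/-- The reflection as a linear isometry. -/
def refl' (N : ℕ) (e : Euc N) : Euc N ≃ₗᵢ[ℝ] Euc N := (ℝ ∙ e)ᗮ.reflection

lemma refl'_apply {N : ℕ} {e : Euc N} (he : ‖e‖ = 1) (x : Euc N) :
    refl' N e x = reflect N e x := by
  unfold refl' reflect
  rw [Submodule.reflection_orthogonal_apply, Submodule.reflection_singleton_apply, he,
    real_inner_comm]
  simp only [RCLike.ofReal_real_eq_id, id, one_pow, div_one, mul_smul]
  rw [neg_sub, two_smul, two_smul]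

lemma reflect_reflect {N : ℕ} {e : Euc N} (he : ‖e‖ = 1) (x : Euc N) :
    reflect N e (reflect N e x) = x := by
  rw [← refl'_apply he, ← refl'_apply he]
  exact Submodule.reflection_reflection _ x

lemma continuous_reflect {N : ℕ} (e : Euc N) : Continuous (reflect N e) := by
  unfold reflect; fun_prop

lemma norm_reflect {N : ℕ} {e : Euc N} (he : ‖e‖ = 1) (x : Euc N) :
    ‖reflect N e x‖ = ‖x‖ := by
  rw [← refl'_apply he, LinearIsometryEquiv.norm_map]

lemma inner_reflect {N : ℕ} (e f x : Euc N) :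
    (inner ℝ (reflect N e x) f : ℝ) = inner ℝ x f - 2 * inner ℝ x e * inner ℝ e f := by
  simp only [reflect, inner_sub_left, real_inner_smul_left]

lemma norm_sub_reflect {N : ℕ} {e : Euc N} (he : ‖e‖ = 1) (x y : Euc N) :
    ‖x - reflect N e y‖ ^ 2 = ‖x - y‖ ^ 2 + 4 * (inner ℝ x e * inner ℝ y e : ℝ) := by
  rw [norm_sub_sq_real, norm_sub_sq_real, norm_reflect he]
  rw [real_inner_comm, inner_reflect, real_inner_comm x y, real_inner_comm x e]
  ring

lemma cNs_pos (N : ℕ) {s : ℝ} (hs : s ∈ Set.Ioo (0 : ℝ) 1) : 0 < cNs N s := by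
  obtain ⟨h0, h1⟩ := hs
  unfold cNs
  have g1 : 0 < Real.Gamma ((N : ℝ) / 2 + s) := Real.Gamma_pos_of_pos (by positivity)
  have g2 : 0 < Real.Gamma (1 - s) := Real.Gamma_pos_of_pos (by linarith)
  have := Real.pi_pos
  positivity

lemma mu1_mul_le {N : ℕ} {s : ℝ} (hs : s ∈ Set.Ioo (0 : ℝ) 1) {B : Set (Euc N)} {z : Euc N → ℝ}
    (hz : memHs N s B z) (hm : (∫ x in B, z x) = 0) (hp : 0 < ∫ x in B, z x ^ 2) :
    mu1 N s B * (∫ x in B, z x ^ 2) ≤ cNs N s / 2 * (semiSq N s B z).toReal := by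
  set I := ∫ x in B, z x ^ 2 with hI
  set c := (Real.sqrt I)⁻¹ with hc
  have hcI : c ^ 2 = I⁻¹ := by rw [hc, inv_pow, Real.sq_sqrt hp.le]
  have hmem := memHs_smul c hz
  have key : mu1 N s B ≤ cNs N s / 2 * (semiSq N s B (fun x => c * z x)).toReal := by
    unfold mu1
    refine csInf_le ⟨0, ?_⟩ ⟨_, hmem, ?_, ?_, rfl⟩
    · rintro t ⟨v, -, -, -, rfl⟩
      have := cNs_pos N hs
      positivity
    · simp only [mul_pow]
      rw [integral_const_mul, ← hI, hcI, inv_mul_cancel₀ hp.ne']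
    · rw [integral_const_mul, hm, mul_zero]
  rw [← bform_self hmem.1, bform_smul_self, hcI, bform_self hz.1] at key
  have := mul_le_mul_of_nonneg_right key hp.le
  refine this.trans (le_of_eq ?_)
  field_simp

lemma WSol.semi {N : ℕ} {s : ℝ} {B : Set (Euc N)} {w : Euc N → ℝ} (hw : WSol N s B w) :
    cNs N s / 2 * (semiSq N s B w).toReal = mu1 N s B * ∫ x in B, w x ^ 2 := by
  rw [← bform_self hw.mem.1, hw.eqn w hw.mem]
  simp only [pow_two]

lemma WSol.eq_zero {N : ℕ} {s : ℝ} (hs : s ∈ Set.Ioo (0 : ℝ) 1) {R : ℝ} (hR : 0 < R)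
    {w : Euc N → ℝ} (hw : WSol N s (Metric.ball 0 R) w) (hc : Continuous w)
    (h0 : w =ᵐ[volume.restrict (Metric.ball 0 R)] 0) : ∀ x, w x = 0 := by
  have hcp := cNs_pos N hs
  have hB : EqOn w 0 (Metric.ball 0 R) :=
    Measure.eqOn_open_of_ae_eq h0 Metric.isOpen_ball hc.continuousOn continuousOn_const
  have hI : (∫ x in Metric.ball 0 R, w x ^ 2) = 0 := by
    rw [integral_congr_ae (g := fun _ => (0 : ℝ)), integral_zero]
    filter_upwards [h0] with x hx
    simp [hx]
  have h1 := hw.semi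
  rw [hI, mul_zero] at h1
  have h2 : semiSq N s (Metric.ball 0 R) w = 0 := by
    have : (semiSq N s (Metric.ball 0 R) w).toReal = 0 := by
      rcases mul_eq_zero.1 h1 with h | h
      · linarith
      · exact h
    exact ((ENNReal.toReal_eq_zero_iff _).1 this).resolve_right hw.mem.2.2.ne
  rw [semiSq_eq, lintegral_eq_zero_iff (measurable_qf hw.mem.1 hw.mem.1).ennreal_ofReal] at h2
  set U : Set (Euc N × Euc N) := {q | q.1 ∈ Metric.ball (0 : Euc N) R ∧ w q.1 ≠ w q.2} with hU
  have hUo : IsOpen U := by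
    refine (Metric.isOpen_ball.preimage continuous_fst).inter ?_
    exact isOpen_ne_fun (hc.comp continuous_fst) (hc.comp continuous_snd)
  have hUr : U ⊆ reg N (Metric.ball 0 R) := fun q hq => Or.inl (subset_closure hq.1)
  have hU0 : volume U = 0 := by
    have h3 : ∀ᵐ q ∂(volume.restrict U), ENNReal.ofReal (qf N s w w q) = 0 :=
      ae_restrict_of_ae_restrict_of_subset hUr h2
    rw [ae_restrict_iff' hUo.measurableSet] at h3
    refine measure_mono_null ?_ h3
    intro q hq hq'
    have h4 := hq' hq
    simp only [ENNReal.ofReal_eq_zero, qf] at h4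
    have h5 : w q.1 - w q.2 ≠ 0 := sub_ne_zero.2 hq.2
    have h6 : q.1 - q.2 ≠ 0 := fun h => hq.2 (by rw [sub_eq_zero.1 h])
    have h7 : 0 < kern N s q.1 q.2 := Real.rpow_pos_of_pos (norm_pos_iff.2 h6) _
    have : 0 < (w q.1 - w q.2) * (w q.1 - w q.2) / kern N s q.1 q.2 :=
      div_pos (mul_self_pos.2 h5) h7
    linarith
  have hUe := hUo.eq_empty_of_measure_zero hU0
  intro y
  have h00 : w 0 = 0 := hB (Metric.mem_ball_self hR)
  by_contra hy
  have : ((0 : Euc N), y) ∈ U := ⟨Metric.mem_ball_self hR, by rw [h00]; exact fun h => hy h.symm⟩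
  rw [hUe] at this
  exact this

/-- The symmetrised integrand for functions antisymmetric with respect to `e`. -/
def symF (N : ℕ) (s : ℝ) (e : Euc N) (v : Euc N → ℝ) (q : Euc N × Euc N) : ℝ :=
  (v q.1 - v q.2) ^ 2 / kern N s q.1 q.2 + (v q.1 + v q.2) ^ 2 / kern N s q.1 (reflect N e q.2)

lemma symF_nonneg (N : ℕ) (s : ℝ) (e : Euc N) (v : Euc N → ℝ) (q : Euc N × Euc N) :
    0 ≤ symF N s e v q :=
  add_nonneg (div_nonneg (sq_nonneg _) (kern_nonneg _ _ _ _))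
    (div_nonneg (sq_nonneg _) (kern_nonneg _ _ _ _))

lemma measurable_kern_reflect {N : ℕ} (s : ℝ) (e : Euc N) :
    Measurable (fun q : Euc N × Euc N => kern N s q.1 (reflect N e q.2)) := by
  unfold kern
  have h : Continuous (fun q : Euc N × Euc N => q.1 - reflect N e q.2) :=
    continuous_fst.sub ((continuous_reflect e).comp continuous_snd)
  exact h.norm.measurable.pow_const _

lemma measurable_symF {N : ℕ} (s : ℝ) (e : Euc N) {v : Euc N → ℝ} (hv : Measurable v) :
    Measurable (symF N s e v) := by
  have h1 : Measurable (fun q : Euc N × Euc N => v q.1) := hv.comp measurable_fst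
  have h2 : Measurable (fun q : Euc N × Euc N => v q.2) := hv.comp measurable_snd
  have h4 : Measurable (fun q : Euc N × Euc N => (v q.1 - v q.2) ^ 2 / kern N s q.1 q.2) :=
    ((h1.sub h2).pow_const 2).div (measurable_kern N s)
  have h5 : Measurable (fun q : Euc N × Euc N =>
      (v q.1 + v q.2) ^ 2 / kern N s q.1 (reflect N e q.2)) :=
    ((h1.add h2).pow_const 2).div (measurable_kern_reflect s e)
  exact h4.add h5

lemma lintegral_symF {N : ℕ} (s : ℝ) {R : ℝ} (hR : 0 < R) {e : Euc N} (he : ‖e‖ = 1)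
    {v : Euc N → ℝ} (hv : Measurable v) (ha : ∀ x, v (reflect N e x) = - v x) :
    (∫⁻ q in reg N (Metric.ball 0 R), ENNReal.ofReal (symF N s e v q)) =
      2 * semiSq N s (Metric.ball 0 R) v := by
  have h1 := setLIntegral_reg hR (LinearIsometryEquiv.refl ℝ (Euc N)) (refl' N e)
    (fun q => ENNReal.ofReal ((v q.1 - v q.2) ^ 2 / kern N s q.1 q.2))
  simp only [LinearIsometryEquiv.coe_refl, id, refl'_apply he, ha, sub_neg_eq_add] at h1
  have h2 : Measurable (fun q : Euc N × Euc N =>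
      ENNReal.ofReal ((v q.1 - v q.2) ^ 2 / kern N s q.1 q.2)) := by
    have h1 : Measurable (fun q : Euc N × Euc N => v q.1) := hv.comp measurable_fst
    have h2 : Measurable (fun q : Euc N × Euc N => v q.2) := hv.comp measurable_snd
    exact (((h1.sub h2).pow_const 2).div (measurable_kern N s)).ennreal_ofReal
  unfold symF
  simp only [ENNReal.ofReal_add (div_nonneg (sq_nonneg _) (kern_nonneg _ _ _ _))
    (div_nonneg (sq_nonneg _) (kern_nonneg _ _ _ _))]
  rw [lintegral_add_left h2, h1, two_mul]
  rfl

/-- Sign rearrangement: `|v|` on the positive side, `-|v|` on the other. -/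
def signRe (N : ℕ) (e : Euc N) (v : Euc N → ℝ) (x : Euc N) : ℝ :=
  if 0 < (inner ℝ x e : ℝ) then |v x| else - |v x|

lemma signRe_sq {N : ℕ} (e : Euc N) (v : Euc N → ℝ) (x : Euc N) :
    signRe N e v x ^ 2 = v x ^ 2 := by
  unfold signRe; split_ifs <;> simp

lemma inner_reflect_self {N : ℕ} {e : Euc N} (he : ‖e‖ = 1) (x : Euc N) :
    (inner ℝ (reflect N e x) e : ℝ) = - inner ℝ x e := by
  rw [inner_reflect, inner_self_one he]; ring

lemma anti_zero {N : ℕ} {e : Euc N} {v : Euc N → ℝ}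
    (ha : ∀ x, v (reflect N e x) = - v x) {x : Euc N} (hx : (inner ℝ x e : ℝ) = 0) : v x = 0 := by
  have := ha x
  simp only [reflect, hx, mul_zero, zero_smul, sub_zero] at this
  linarith

lemma signRe_anti {N : ℕ} {e : Euc N} (he : ‖e‖ = 1) {v : Euc N → ℝ}
    (ha : ∀ x, v (reflect N e x) = - v x) (x : Euc N) :
    signRe N e v (reflect N e x) = - signRe N e v x := by
  unfold signRe
  rw [inner_reflect_self he, ha, abs_neg]
  rcases lt_trichotomy (inner ℝ x e : ℝ) 0 with h | h | h
  · rw [if_pos (by linarith), if_neg (by linarith), neg_neg]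
  · rw [anti_zero ha h]; simp
  · rw [if_neg (by linarith), if_pos h]

lemma kern_compare {N : ℕ} {s : ℝ} (hs : s ∈ Set.Ioo (0 : ℝ) 1) {x y x' y' : Euc N}
    (h0 : x ≠ y) (h : ‖x - y‖ ^ 2 ≤ ‖x' - y'‖ ^ 2) :
    (kern N s x' y')⁻¹ ≤ (kern N s x y)⁻¹ := by
  have hp : 0 < ‖x - y‖ := norm_pos_iff.2 (sub_ne_zero.2 h0)
  have hk : 0 < kern N s x y := Real.rpow_pos_of_pos hp _
  refine inv_anti₀ hk ?_
  refine Real.rpow_le_rpow hp.le ?_ ?_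
  · exact (sq_le_sq₀ hp.le (norm_nonneg _)).1 h
  · have := hs.1; positivity

lemma kern_compare_lt {N : ℕ} {s : ℝ} (hs : s ∈ Set.Ioo (0 : ℝ) 1) {x y x' y' : Euc N}
    (h0 : x ≠ y) (h : ‖x - y‖ ^ 2 < ‖x' - y'‖ ^ 2) :
    (kern N s x' y')⁻¹ < (kern N s x y)⁻¹ := by
  have hp : 0 < ‖x - y‖ := norm_pos_iff.2 (sub_ne_zero.2 h0)
  have hk : 0 < kern N s x y := Real.rpow_pos_of_pos hp _
  refine inv_strictAnti₀ hk ?_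
  refine Real.rpow_lt_rpow hp.le ?_ ?_
  · exact (sq_lt_sq₀ hp.le (norm_nonneg _)).1 h
  · have := hs.1; positivity

lemma symF_diff {N : ℕ} (s : ℝ) (e : Euc N) (v z : Euc N → ℝ) (hz : ∀ x, z x ^ 2 = v x ^ 2)
    (q : Euc N × Euc N) :
    symF N s e v q - symF N s e z q = 2 * (z q.1 * z q.2 - v q.1 * v q.2) *
      ((kern N s q.1 q.2)⁻¹ - (kern N s q.1 (reflect N e q.2))⁻¹) := by
  unfold symF
  simp only [div_eq_mul_inv]
  have h1 := hz q.1
  have h2 := hz q.2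
  linear_combination (-(kern N s q.1 q.2)⁻¹ - (kern N s q.1 (reflect N e q.2))⁻¹) * (h1 + h2)

lemma symF_le {N : ℕ} {s : ℝ} (hs : s ∈ Set.Ioo (0 : ℝ) 1) {e : Euc N} (he : ‖e‖ = 1)
    {v : Euc N → ℝ} (ha : ∀ x, v (reflect N e x) = - v x) (q : Euc N × Euc N) :
    symF N s e (signRe N e v) q ≤ symF N s e v q := by
  rw [← sub_nonneg, symF_diff s e v _ (signRe_sq e v)]
  obtain ⟨x, y⟩ := q
  simp only
  by_cases hxy : x = y
  · subst hxy
    have h := signRe_sq e v x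
    have : signRe N e v x * signRe N e v x - v x * v x = 0 := by linarith
    rw [this]; simp
  by_cases hxy' : x = reflect N e y
  · have h := signRe_sq e v y
    have : signRe N e v x * signRe N e v y - v x * v y = 0 := by
      rw [hxy', signRe_anti he ha, ha]; linarith
    rw [this]; simp
  have hn := norm_sub_reflect he x y
  have hab := abs_mul (v x) (v y)
  have hab1 := le_abs_self (v x * v y)
  have hab2 := neg_abs_le (v x * v y)
  by_cases hx : 0 < (inner ℝ x e : ℝ)
  · by_cases hy : 0 < (inner ℝ y e : ℝ)
    · have hk := kern_compare (x := x) (y := y) (x' := x) (y' := reflect N e y) hs hxy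
        (by nlinarith [mul_pos hx hy])
      have : 0 ≤ signRe N e v x * signRe N e v y - v x * v y := by
        simp only [signRe, hx, hy, if_true]; nlinarith
      have h3 := sub_nonneg.2 hk
      positivity
    · have hk := kern_compare (x' := x) (y' := y) (x := x) (y := reflect N e y) hs hxy'
        (by nlinarith)
      have : signRe N e v x * signRe N e v y - v x * v y ≤ 0 := by
        simp only [signRe, hx, hy, if_true, if_false]; nlinarith
      nlinarith
  · by_cases hy : 0 < (inner ℝ y e : ℝ)
    · have hk := kern_compare (x' := x) (y' := y) (x := x) (y := reflect N e y) hs hxy'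
        (by nlinarith)
      have : signRe N e v x * signRe N e v y - v x * v y ≤ 0 := by
        simp only [signRe, hx, hy, if_true, if_false]; nlinarith
      nlinarith
    · have hk := kern_compare (x := x) (y := y) (x' := x) (y' := reflect N e y) hs hxy
        (by nlinarith)
      have : 0 ≤ signRe N e v x * signRe N e v y - v x * v y := by
        simp only [signRe, hx, hy, if_false]; nlinarith
      have h3 := sub_nonneg.2 hk
      positivity

lemma symF_lt {N : ℕ} {s : ℝ} (hs : s ∈ Set.Ioo (0 : ℝ) 1) {e : Euc N} (he : ‖e‖ = 1)
    {v : Euc N → ℝ} {x y : Euc N} (hx : 0 < (inner ℝ x e : ℝ)) (hy : 0 < (inner ℝ y e : ℝ))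
    (hv : v x * v y < 0) :
    symF N s e (signRe N e v) (x, y) < symF N s e v (x, y) := by
  rw [← sub_pos, symF_diff s e v _ (signRe_sq e v)]
  have hxy : x ≠ y := by
    rintro rfl
    nlinarith [mul_self_nonneg (v x)]
  have hn := norm_sub_reflect he x y
  have hk := kern_compare_lt (x := x) (y := y) (x' := x) (y' := reflect N e y) hs hxy
    (by nlinarith [mul_pos hx hy])
  have : 0 < signRe N e v x * signRe N e v y - v x * v y := by
    simp only [signRe, hx, hy, if_true]
    rw [← abs_mul]
    have := abs_nonneg (v x * v y)
    linarith
  have h3 := sub_pos.2 hk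
  simp only
  positivity

lemma measurable_signRe {N : ℕ} (e : Euc N) {v : Euc N → ℝ} (hv : Measurable v) :
    Measurable (signRe N e v) := by
  unfold signRe
  have ho : IsOpen {x : Euc N | 0 < (inner ℝ x e : ℝ)} :=
    isOpen_lt continuous_const (by fun_prop)
  have ha : Measurable (fun x => |v x|) := continuous_abs.measurable.comp hv
  exact Measurable.ite ho.measurableSet ha ha.neg

/-- A weak solution antisymmetric with respect to two orthogonal directions vanishes. -/
lemma WSol.doubly_anti {N : ℕ} {s : ℝ} (hs : s ∈ Set.Ioo (0 : ℝ) 1) {R : ℝ} (hR : 0 < R)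
    {v : Euc N → ℝ} (hw : WSol N s (Metric.ball 0 R) v) (hc : Continuous v)
    {e f : Euc N} (he : ‖e‖ = 1) (hf : ‖f‖ = 1) (hef : (inner ℝ e f : ℝ) = 0)
    (hae : ∀ x, v (reflect N e x) = - v x) (haf : ∀ x, v (reflect N f x) = - v x) :
    ∀ x, v x = 0 := by
  have hcp := cNs_pos N hs
  refine hw.eq_zero hs hR hc ?_
  set B := Metric.ball (0 : Euc N) R with hB
  by_cases hI : (∫ x in B, v x ^ 2) = 0
  · rw [integral_eq_zero_iff_of_nonneg (fun x => sq_nonneg _) (memHs_iff.1 hw.mem).2.1] at hI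
    filter_upwards [hI] with x hx
    simpa using hx
  have hIp : 0 < ∫ x in B, v x ^ 2 :=
    lt_of_le_of_ne (integral_nonneg fun x => sq_nonneg _) (Ne.symm hI)
  set z := signRe N e v with hz
  have hzm : Measurable z := measurable_signRe e hw.mem.1
  have hza : ∀ x, z (reflect N e x) = - z x := signRe_anti he hae
  have hle : ∀ q, ENNReal.ofReal (symF N s e z q) ≤ ENNReal.ofReal (symF N s e v q) :=
    fun q => ENNReal.ofReal_le_ofReal (symF_le hs he hae q)
  have e1 := lintegral_symF s hR he hzm hza
  have e2 := lintegral_symF s hR he hw.mem.1 hae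
  have hsemi : semiSq N s B z ≤ semiSq N s B v := by
    have h := lintegral_mono (μ := volume.restrict (reg N B)) hle
    rw [e1, e2] at h
    exact (ENNReal.mul_le_mul_iff_right (by norm_num) (by norm_num)).1 h
  have hzmem : memHs N s B z := by
    refine ⟨hzm, ?_, hsemi.trans_lt hw.mem.2.2⟩
    have := hw.mem.2.1
    unfold l2sq at this ⊢
    simpa only [hz, signRe_sq] using this
  have hmean : (∫ x in B, z x) = 0 := by
    have h := setIntegral_ball (R := R) (refl' N e) z
    simp only [refl'_apply he, hza] at h
    rw [integral_neg] at h
    linarith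
  have hzI : (∫ x in B, z x ^ 2) = ∫ x in B, v x ^ 2 := by simp only [hz, signRe_sq]
  have hmu := mu1_mul_le hs hzmem hmean (by rw [hzI]; exact hIp)
  rw [hzI, ← hw.semi] at hmu
  have hge : semiSq N s B v ≤ semiSq N s B z := by
    rw [← ENNReal.toReal_le_toReal hw.mem.2.2.ne hzmem.2.2.ne]
    exact le_of_mul_le_mul_left hmu (by positivity)
  have hae_eq : (fun q => ENNReal.ofReal (symF N s e z q)) =ᵐ[volume.restrict (reg N B)]
      (fun q => ENNReal.ofReal (symF N s e v q)) := by
    refine ae_eq_of_ae_le_of_lintegral_le (Eventually.of_forall hle) ?_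
      (measurable_symF s e hw.mem.1).ennreal_ofReal.aemeasurable ?_
    · rw [e1]; exact ENNReal.mul_ne_top (by norm_num) hzmem.2.2.ne
    · rw [e1, e2]; gcongr
  set U : Set (Euc N × Euc N) := {q | (q.1 ∈ B ∧ 0 < (inner ℝ q.1 e : ℝ)) ∧
    (0 < (inner ℝ q.2 e : ℝ) ∧ v q.1 * v q.2 < 0)} with hU
  have hUo : IsOpen U := by
    refine IsOpen.inter (IsOpen.inter (Metric.isOpen_ball.preimage continuous_fst) ?_)
      (IsOpen.inter ?_ ?_)
    · have h : Continuous (fun q : Euc N × Euc N => (inner ℝ q.1 e : ℝ)) := by fun_prop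
      exact isOpen_lt continuous_const h
    · have h : Continuous (fun q : Euc N × Euc N => (inner ℝ q.2 e : ℝ)) := by fun_prop
      exact isOpen_lt continuous_const h
    · have h : Continuous (fun q : Euc N × Euc N => v q.1 * v q.2) := by fun_prop
      exact isOpen_lt h continuous_const
  have hUr : U ⊆ reg N B := fun q hq => Or.inl (subset_closure hq.1.1)
  have hU0 : volume U = 0 := by
    have h3 := ae_restrict_of_ae_restrict_of_subset hUr hae_eq
    rw [ae_restrict_iff' hUo.measurableSet] at h3
    refine measure_mono_null ?_ h3
    intro q hq hq'
    have h4 := hq' hq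
    have h5 := symF_lt hs he hq.1.2 hq.2.1 hq.2.2
    rw [ENNReal.ofReal_eq_ofReal_iff (symF_nonneg _ _ _ _ _) (symF_nonneg _ _ _ _ _)] at h4
    exact h5.ne h4
  have hUe := hUo.eq_empty_of_measure_zero hU0
  have hpos : ∀ x ∈ B, 0 < (inner ℝ x e : ℝ) → v x = 0 := by
    intro x hx hxe
    by_contra hne
    have : (x, reflect N f x) ∈ U := by
      refine ⟨⟨hx, hxe⟩, ?_, ?_⟩
      · simp only
        rw [inner_reflect, real_inner_comm e f, hef]
        linarith
      · simp only [haf]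
        nlinarith [mul_self_pos.2 hne]
    rw [hUe] at this
    exact this
  refine (ae_restrict_iff' Metric.isOpen_ball.measurableSet).2 (Eventually.of_forall fun x hx => ?_)
  rcases lt_trichotomy (inner ℝ x e : ℝ) 0 with h | h | h
  · have h1 := hpos (reflect N e x) ?_ ?_
    · rw [hae] at h1
      simp only [Pi.zero_apply]; linarith
    · rw [hB, mem_ball_zero_iff, norm_reflect he]
      simpa [hB] using hx
    · rw [inner_reflect_self he]; linarith
  · exact anti_zero hae h
  · exact hpos x hx h

lemma FoliatedSchwarz.axial {N : ℕ} {p : Euc N} {u : Euc N → ℝ} (h : FoliatedSchwarz N p u)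
    {q : Euc N} (hq : ‖q‖ = 1) (hpq : (inner ℝ q p : ℝ) = 0) (x : Euc N) :
    u (reflect N q x) = u x := by
  obtain ⟨uh, -, h⟩ := h
  by_cases hx : x = 0
  · subst hx; simp [reflect]
  · have hx' : reflect N q x ≠ 0 := by
      rw [← norm_ne_zero_iff, norm_reflect hq, norm_ne_zero_iff]; exact hx
    rw [h _ hx', h _ hx, norm_reflect hq, inner_reflect, hpq, mul_zero, sub_zero]

lemma reflect_comm_of_orth {N : ℕ} {p q : Euc N} (hpq : (inner ℝ p q : ℝ) = 0) (x : Euc N) :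
    reflect N p (reflect N q x) =
      x - (2 * (inner ℝ x p : ℝ)) • p - (2 * (inner ℝ x q : ℝ)) • q := by
  have hqp : (inner ℝ q p : ℝ) = 0 := by rw [real_inner_comm]; exact hpq
  rw [reflect, inner_reflect, hqp, reflect]
  simp only [mul_zero, sub_zero]
  abel

/-- The evenly reflected weak solution is invariant under every reflection. -/
lemma refl_inv {N : ℕ} {s : ℝ} (hs : s ∈ Set.Ioo (0 : ℝ) 1) {R : ℝ} (hR : 0 < R)
    {w : Euc N → ℝ} (hw : WSol N s (Metric.ball 0 R) w) (hc : Continuous w)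
    {p : Euc N} (hp : ‖p‖ = 1) (hwp : ∀ x, w (reflect N p x) = w x)
    (hwq : ∀ q : Euc N, ‖q‖ = 1 → (inner ℝ q p : ℝ) = 0 → ∀ x, w (reflect N q x) = w x)
    {e : Euc N} (he : ‖e‖ = 1) (x : Euc N) : w (reflect N e x) = w x := by
  set α : ℝ := inner ℝ e p with hα
  set d : Euc N := e - α • p with hd
  have hpp := inner_self_one hp
  have hee := inner_self_one he
  by_cases hd0 : d = 0
  · have hep : e = α • p := sub_eq_zero.1 hd0
    have hα2 : α * α = 1 := by
      rw [hep, real_inner_smul_left, real_inner_smul_right, hpp] at hee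
      linarith
    have : reflect N e x = reflect N p x := by
      unfold reflect
      rw [hep, real_inner_smul_right, smul_smul]
      congr 2
      linear_combination (2 * inner ℝ x p : ℝ) * hα2
    rw [this, hwp]
  set β : ℝ := ‖d‖ with hβ
  have hβ0 : β ≠ 0 := norm_ne_zero_iff.2 hd0
  set q : Euc N := β⁻¹ • d with hq
  have hq1 : ‖q‖ = 1 := by
    rw [hq, norm_smul, norm_inv, Real.norm_eq_abs, abs_of_nonneg (norm_nonneg _),
      inv_mul_cancel₀ hβ0]
  have hqq := inner_self_one hq1
  have hdp : (inner ℝ d p : ℝ) = 0 := by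
    rw [hd, inner_sub_left, real_inner_smul_left, hpp, ← hα]; ring
  have hqp : (inner ℝ q p : ℝ) = 0 := by
    rw [hq, real_inner_smul_left, hdp, mul_zero]
  have hpq : (inner ℝ p q : ℝ) = 0 := by rw [real_inner_comm]; exact hqp
  have hedec : e = α • p + β • q := by
    rw [hq, smul_smul, mul_inv_cancel₀ hβ0, one_smul, hd]; abel
  clear_value q β α
  have hab : α ^ 2 + β ^ 2 = 1 := by
    rw [hedec] at hee
    simp only [inner_add_left, inner_add_right, real_inner_smul_left, real_inner_smul_right,
      hpp, hqq, hpq, hqp] at hee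
    linarith
  set f : Euc N := (-β) • p + α • q with hf
  have hff : (inner ℝ f f : ℝ) = 1 := by
    simp only [hf, inner_add_left, inner_add_right, real_inner_smul_left, real_inner_smul_right,
      hpp, hqq, hpq, hqp]
    linarith
  have hf1 : ‖f‖ = 1 := by
    rw [real_inner_self_eq_norm_sq] at hff
    nlinarith [norm_nonneg f]
  have hef : (inner ℝ e f : ℝ) = 0 := by
    simp only [hedec, hf, inner_add_left, inner_add_right, real_inner_smul_left,
      real_inner_smul_right, hpp, hqq, hpq, hqp]
    ring
  have hfe : (inner ℝ f e : ℝ) = 0 := by rw [real_inner_comm]; exact hef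
  have hrot : ∀ y, reflect N e (reflect N f y) = reflect N p (reflect N q y) := by
    intro y
    rw [reflect_comm_of_orth hef, reflect_comm_of_orth hpq, sub_sub, sub_sub]
    congr 1
    rw [hf, hedec]
    simp only [inner_add_right, real_inner_smul_right]
    match_scalars
    · linear_combination (2 * inner ℝ y p : ℝ) * hab
    · linear_combination (2 * inner ℝ y q : ℝ) * hab
  have hcomm : ∀ y, reflect N f (reflect N e y) = reflect N e (reflect N f y) := by
    intro y
    rw [reflect_comm_of_orth hef, reflect_comm_of_orth hfe]
    abel
  have hinv : ∀ y, w (reflect N e (reflect N f y)) = w y := by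
    intro y
    rw [hrot, hwp, hwq q hq1 hqp]
  have hfe' : ∀ y, w (reflect N f y) = w (reflect N e y) := by
    intro y
    have := hinv (reflect N e y)
    rw [← this, hcomm, reflect_reflect he]
  have hB : volume (Metric.ball (0 : Euc N) R) ≠ ⊤ := measure_ball_lt_top.ne
  have hsol : WSol N s (Metric.ball 0 R) (fun y => w (reflect N e y) + (-1) * w y) := by
    have h1 := hw.iso hR (refl' N e)
    simp only [refl'_apply he] at h1
    exact h1.add hB (hw.smul (-1))
  have hc' : Continuous (fun y => w (reflect N e y) + (-1) * w y) :=
    (hc.comp (continuous_reflect e)).add (continuous_const.mul hc)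
  have h0 := hsol.doubly_anti hs hR hc' he hf1 hef
    (fun y => by rw [reflect_reflect he]; ring)
    (fun y => by rw [hinv, hfe']; ring) x
  linarith


/-- Proposition 4.7: if a continuous first nontrivial eigenfunction `u` in a
ball is antisymmetric with respect to no hyperplane through the origin, and `u` is foliated
Schwarz symmetric w.r.t. `p`, then `u + u∘σ_p` is a radially symmetric first nontrivial
eigenfunction. -/
theorem statement18 (N : ℕ) (hN : 2 ≤ N) (s : ℝ) (hs : s ∈ Set.Ioo (0 : ℝ) 1)
    (R : ℝ) (hR : 0 < R) (B : Set (Euc N)) (hB : B = Metric.ball (0 : Euc N) R)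
    (u : Euc N → ℝ) (hu : IsFirstEigen N s B u) (hc : Continuous u)
    (hnoanti : ∀ e : Euc N, ‖e‖ = 1 → ¬ (∀ x : Euc N, u (reflect N e x) = - u x))
    (p : Euc N) (hp : ‖p‖ = 1) (hfs : FoliatedSchwarz N p u) :
    IsFirstEigen N s B (fun x => u x + u (reflect N p x)) ∧
    Radial N (fun x => u x + u (reflect N p x)) := by
  subst hB
  have hBt : volume (Metric.ball (0 : Euc N) R) ≠ ⊤ := measure_ball_lt_top.ne
  have hus : WSol N s (Metric.ball 0 R) u := ⟨hu.1, hu.2.2.1, hu.2.2.2⟩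
  set w : Euc N → ℝ := fun x => u x + u (reflect N p x) with hw
  have hws : WSol N s (Metric.ball 0 R) w := by
    have h1 := hus.iso hR (refl' N p)
    simp only [refl'_apply hp] at h1
    exact hus.add hBt h1
  have hwc : Continuous w := hc.add (hc.comp (continuous_reflect p))
  have hwp : ∀ x, w (reflect N p x) = w x := by
    intro x
    simp only [hw]
    rw [reflect_reflect hp, add_comm]
  have hwq : ∀ q : Euc N, ‖q‖ = 1 → (inner ℝ q p : ℝ) = 0 → ∀ x, w (reflect N q x) = w x := by
    intro q hq hqp x
    have hpq : (inner ℝ p q : ℝ) = 0 := by rw [real_inner_comm]; exact hqp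
    have hcomm : reflect N p (reflect N q x) = reflect N q (reflect N p x) := by
      rw [reflect_comm_of_orth hpq, reflect_comm_of_orth hqp]; abel
    simp only [hw]
    rw [hcomm, hfs.axial hq hqp, hfs.axial hq hqp]
  refine ⟨⟨hws.mem, ?_, hws.mean, hws.eqn⟩, ?_⟩
  · intro h0
    have hz := hws.eq_zero hs hR hwc h0
    refine hnoanti p hp fun x => ?_
    have := hz x
    simp only [hw] at this
    linarith
  · refine ⟨fun r => w (r • p), fun x => ?_⟩
    by_cases hx : x = ‖x‖ • p
    · exact congrArg w hx
    set y : Euc N := ‖x‖ • p with hy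
    have hny : ‖y‖ = ‖x‖ := by rw [hy, norm_smul, hp]; simp
    clear_value y
    have hd : ‖x - y‖ ≠ 0 := norm_ne_zero_iff.2 (sub_ne_zero.2 hx)
    set e : Euc N := ‖x - y‖⁻¹ • (x - y) with he
    have he1 : ‖e‖ = 1 := by
      rw [he, norm_smul, norm_inv, norm_norm, inv_mul_cancel₀ hd]
    have h1 : (2 * inner ℝ x (x - y) : ℝ) = ‖x - y‖ ^ 2 := by
      rw [norm_sub_sq_real, hny, inner_sub_right, real_inner_self_eq_norm_sq]; ring
    have h2 : reflect N e x = y := by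
      rw [reflect, he, real_inner_smul_right, smul_smul]
      have : 2 * (‖x - y‖⁻¹ * inner ℝ x (x - y)) * ‖x - y‖⁻¹ = (1 : ℝ) := by
        field_simp
        linarith
      rw [this, one_smul]; abel
    have h3 := refl_inv hs hR hws hwc hp hwp hwq he1 x
    rw [h2] at h3
    exact h3.symm.trans (congrArg w hy)

end FracNeumann
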